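/- Let (E₀,E₁) be a Banach couple, ρ a function parameter of class ℬ^{+−} and 0 < q ≤ ∞. Then (E₀,E₁)_{ρ,q;J} = (E₀,E₁)_{ρ,q;K} with equivalent norms (the Equivalence Theorem between the J-method and the K-method with function parameter). -/

import Mathlib

open Filter Set MeasureTheory ENNReal NNReal

noncomputable section

/-! ### Function parameters -/

/-- `rbar ρ s = sup_{t>0} ρ(s t)/ρ(t)`. -/
def rbar (ρ : ℝ → ℝ) (s : ℝ) : ℝ := sSup {r : ℝ | ∃ t > 0, r = ρ (s * t) / ρ t}

/-- The class `ℬ` of function parameters. -/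
structure IsClassB (ρ : ℝ → ℝ) : Prop where
  pos : ∀ t > 0, 0 < ρ t
  cont : ContinuousOn ρ (Set.Ioi 0)
  one : ρ 1 = 1
  bdd : ∀ s > 0, BddAbove {r : ℝ | ∃ t > 0, r = ρ (s * t) / ρ t}

/-- The class `ℬ^{+-}` of function parameters. -/
structure IsClassBpm (ρ : ℝ → ℝ) extends IsClassB ρ : Prop where
  integ : MeasureTheory.IntegrableOn (fun t => min 1 t⁻¹ * rbar ρ t * t⁻¹) (Set.Ioi 0)

/-- Pseudo-concavity of a function parameter. -/
def IsPseudoConcave (ρ : ℝ → ℝ) : Prop :=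
  ∃ C > 0, ∀ s > 0, ∀ t > 0, ρ t ≤ C * max 1 (t / s) * ρ s

/-! ### `ℓ^q` norms of two-sided sequences with values in `ℝ≥0∞` -/

/-- The `ℓ^q(ℤ)` norm of a sequence of extended reals. -/
def eLq (q : ℝ≥0∞) (a : ℤ → ℝ≥0∞) : ℝ≥0∞ :=
  if q = ∞ then ⨆ n, a n else (∑' n, a n ^ q.toReal) ^ (1 / q.toReal)

/-! ### Extended-real-valued norms -/

/-- `N : V → ℝ≥0∞` is a complete (Banach) extended norm; its finiteness set is the
underlying Banach space. -/
structure IsENorm {V : Type*} [AddCommGroup V] [Module ℝ V] (N : V → ℝ≥0∞) : Prop where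
  map_zero : N 0 = 0
  eq_zero : ∀ x, N x = 0 → x = 0
  add_le : ∀ x y, N (x + y) ≤ N x + N y
  smul : ∀ (c : ℝ) (x : V), N (c • x) = ENNReal.ofReal |c| * N x
  complete : ∀ u : ℕ → V, (∀ n, N (u n) ≠ ∞) →
    (∀ ε : ℝ, 0 < ε → ∃ n₀ : ℕ, ∀ m ≥ n₀, ∀ n ≥ n₀, N (u m - u n) < ENNReal.ofReal ε) →
    ∃ x, N x ≠ ∞ ∧ Filter.Tendsto (fun n => N (u n - x)) Filter.atTop (nhds 0)

/-! ### Banach couples realized inside an ambient space -/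

section Couple

variable {E₀ E₁ V : Type*} [NormedAddCommGroup E₀] [NormedSpace ℝ E₀]
  [NormedAddCommGroup E₁] [NormedSpace ℝ E₁] [AddCommGroup V] [Module ℝ V]

/-- The extended norm on the ambient space induced by the embedding of one Banach space:
`∞` outside the range of the embedding. -/
def enormOf {E : Type*} [NormedAddCommGroup E] [NormedSpace ℝ E] (i : E →ₗ[ℝ] V) (x : V) : ℝ≥0∞ :=
  ⨅ (a : E) (_ : i a = x), (‖a‖₊ : ℝ≥0∞)

/-- The `K`-functional of the couple `(E₀, E₁)`. -/
def eKfun (i₀ : E₀ →ₗ[ℝ] V) (i₁ : E₁ →ₗ[ℝ] V) (t : ℝ) (x : V) : ℝ≥0∞ :=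
  ⨅ (a : E₀) (b : E₁) (_ : x = i₀ a + i₁ b), ENNReal.ofReal (‖a‖ + t * ‖b‖)

/-- The extended norm of `E₀ + E₁`. -/
def esumNorm (i₀ : E₀ →ₗ[ℝ] V) (i₁ : E₁ →ₗ[ℝ] V) (x : V) : ℝ≥0∞ := eKfun i₀ i₁ 1 x

/-- The extended norm of `E₀ ∩ E₁`. -/
def einterNorm (i₀ : E₀ →ₗ[ℝ] V) (i₁ : E₁ →ₗ[ℝ] V) (x : V) : ℝ≥0∞ :=
  max (enormOf i₀ x) (enormOf i₁ x)

/-- The extended norm of the interpolation space `(E₀,E₁)_{ρ,q;K}`. -/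
def eKNorm (i₀ : E₀ →ₗ[ℝ] V) (i₁ : E₁ →ₗ[ℝ] V) (ρ : ℝ → ℝ) (q : ℝ≥0∞) (x : V) : ℝ≥0∞ :=
  eLq q (fun n => eKfun i₀ i₁ ((2 : ℝ) ^ n) x / ENNReal.ofReal (ρ ((2 : ℝ) ^ n)))

/-- `(a, b)` is a `J`-representation of `x`: `u_n = a n = b n ∈ E₀ ∩ E₁` and
`x = ∑_{n ∈ ℤ} u_n` with convergence in `E₀ + E₁`. -/
def IsJRep (i₀ : E₀ →ₗ[ℝ] V) (i₁ : E₁ →ₗ[ℝ] V) (x : V) (a : ℤ → E₀) (b : ℤ → E₁) : Prop :=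
  (∀ n, i₀ (a n) = i₁ (b n)) ∧
  ∀ ε : ℝ, 0 < ε → ∃ F : Finset ℤ, ∀ G : Finset ℤ, F ⊆ G →
    esumNorm i₀ i₁ (x - ∑ n ∈ G, i₀ (a n)) < ENNReal.ofReal ε

/-- The extended norm of the interpolation space `(E₀,E₁)_{ρ,q;J}`. -/
def eJNorm (i₀ : E₀ →ₗ[ℝ] V) (i₁ : E₁ →ₗ[ℝ] V) (ρ : ℝ → ℝ) (q : ℝ≥0∞) (x : V) : ℝ≥0∞ :=
  ⨅ (a : ℤ → E₀) (b : ℤ → E₁) (_ : IsJRep i₀ i₁ x a b),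
    eLq q (fun n => ENNReal.ofReal (max ‖a n‖ ((2 : ℝ) ^ n * ‖b n‖) / ρ ((2 : ℝ) ^ n)))

/-- `(E₀, E₁)` is a Banach couple: both spaces are complete and continuously embedded
in the Hausdorff topological vector space `V`. -/
structure IsBanachCouple [TopologicalSpace V] (i₀ : E₀ →ₗ[ℝ] V) (i₁ : E₁ →ₗ[ℝ] V) : Prop where
  t2 : T2Space V
  contAdd : ContinuousAdd V
  contSMul : ContinuousSMul ℝ V
  complete₀ : CompleteSpace E₀
  complete₁ : CompleteSpace E₁
  inj₀ : Function.Injective i₀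
  inj₁ : Function.Injective i₁
  cont₀ : Continuous i₀
  cont₁ : Continuous i₁

/-- `N` is (the extended norm of) an intermediate space for the couple `(E₀, E₁)`. -/
def IsIntermediate (i₀ : E₀ →ₗ[ℝ] V) (i₁ : E₁ →ₗ[ℝ] V) (N : V → ℝ≥0∞) : Prop :=
  IsENorm N ∧
  (∃ C > 0, ∀ x : V, N x ≤ ENNReal.ofReal C * einterNorm i₀ i₁ x) ∧
  (∃ C > 0, ∀ x : V, esumNorm i₀ i₁ x ≤ ENNReal.ofReal C * N x)

/-- `N` is an intermediate space of class `J_ρ(E₀,E₁)`, i.e. `(E₀,E₁)_{ρ,1;J} ↪ N`. -/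
def IsClassJ (i₀ : E₀ →ₗ[ℝ] V) (i₁ : E₁ →ₗ[ℝ] V) (ρ : ℝ → ℝ) (N : V → ℝ≥0∞) : Prop :=
  IsIntermediate i₀ i₁ N ∧ ∃ C > 0, ∀ x : V, N x ≤ ENNReal.ofReal C * eJNorm i₀ i₁ ρ 1 x

/-- `N` is an intermediate space of class `K_ρ(E₀,E₁)`, i.e. `N ↪ (E₀,E₁)_{ρ,∞;K}`. -/
def IsClassK (i₀ : E₀ →ₗ[ℝ] V) (i₁ : E₁ →ₗ[ℝ] V) (ρ : ℝ → ℝ) (N : V → ℝ≥0∞) : Prop :=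
  IsIntermediate i₀ i₁ N ∧ ∃ C > 0, ∀ x : V, eKNorm i₀ i₁ ρ ⊤ x ≤ ENNReal.ofReal C * N x

end Couple

/-! ### The approximation hypothesis (AP) -/

/-- The couple with extended norms `N₀, N₁` satisfies the approximation hypothesis (AP). -/
def SatisfiesAP {V : Type*} [AddCommGroup V] [Module ℝ V] (N₀ N₁ : V → ℝ≥0∞) : Prop :=
  ∃ (P Pp Pm : ℕ → V →ₗ[ℝ] V) (C : ℝ≥0∞) (c : ℕ → ℝ≥0∞),
    0 < C ∧ C ≠ ∞ ∧ Filter.Tendsto c Filter.atTop (nhds 0) ∧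
    (∀ (n : ℕ) (x y : V), N₀ x ≠ ∞ → N₁ y ≠ ∞ →
      (P n (x + y) + Pp n (x + y) + Pm n (x + y) = x + y ∧
        N₀ (P n (x + y)) ≠ ∞ ∧ N₁ (P n (x + y)) ≠ ∞)) ∧
    (∀ n x, N₀ (P n x) ≤ C * N₀ x) ∧ (∀ n x, N₁ (P n x) ≤ C * N₁ x) ∧
    (∀ n x, N₀ (Pp n x) ≤ C * N₀ x) ∧ (∀ n x, N₁ (Pp n x) ≤ C * N₁ x) ∧
    (∀ n x, N₀ (Pm n x) ≤ C * N₀ x) ∧ (∀ n x, N₁ (Pm n x) ≤ C * N₁ x) ∧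
    (∀ n x, N₀ x ≠ ∞ → N₁ (Pp n x) ≤ c n * N₀ x) ∧
    (∀ n x, N₁ x ≠ ∞ → N₀ (Pm n x) ≤ c n * N₁ x)

/-! ### Bilinear operators -/

section Bilinear

variable {VE VF VG : Type*} [AddCommGroup VG]

/-- The norm of a bilinear operator between spaces given by extended norms. -/
def eBilNorm (NE : VE → ℝ≥0∞) (NF : VF → ℝ≥0∞) (NG : VG → ℝ≥0∞) (T : VE → VF → VG) : ℝ≥0∞ :=
  ⨆ (x : VE) (_ : NE x ≤ 1) (y : VF) (_ : NF y ≤ 1), NG (T x y)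

/-- Boundedness of a bilinear operator between spaces given by extended norms. -/
def eBilBdd (NE : VE → ℝ≥0∞) (NF : VF → ℝ≥0∞) (NG : VG → ℝ≥0∞) (T : VE → VF → VG) : Prop :=
  ∃ M : ℝ≥0, ∀ x y, NG (T x y) ≤ (M : ℝ≥0∞) * NE x * NF y

/-- Compactness of a bilinear operator: the image of the product of unit balls is
totally bounded in the target. -/
def eBilCompact (NE : VE → ℝ≥0∞) (NF : VF → ℝ≥0∞) (NG : VG → ℝ≥0∞) (T : VE → VF → VG) : Prop :=
  ∀ ε : ℝ, 0 < ε → ∃ D : Finset VG, ∀ x y, NE x ≤ 1 → NF y ≤ 1 →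
    ∃ c ∈ D, NG (T x y - c) < ENNReal.ofReal ε

end Bilinear

/-! ### A generic K-functional for a couple given by two extended norms -/

/-- Generic `K`-functional for a couple described by two extended norms on `W`. -/
def eKgen {W : Type*} [AddCommGroup W] (N₀ N₁ : W → ℝ≥0∞) (t : ℝ) (x : W) : ℝ≥0∞ :=
  ⨅ y : W, (N₀ (x - y) + ENNReal.ofReal t * N₁ y)

/-- The `(ρ,q;K)`-interpolation extended norm for a couple given by two extended norms. -/
def eKNormGen {W : Type*} [AddCommGroup W] (N₀ N₁ : W → ℝ≥0∞) (ρ : ℝ → ℝ) (q : ℝ≥0∞)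
    (x : W) : ℝ≥0∞ :=
  eLq q (fun n => eKgen N₀ N₁ ((2 : ℝ) ^ n) x / ENNReal.ofReal (ρ ((2 : ℝ) ^ n)))

/-! ### Lions and Persson approximation conditions -/

section LP

variable {E₀ E₁ V : Type*} [NormedAddCommGroup E₀] [NormedSpace ℝ E₀]
  [NormedAddCommGroup E₁] [NormedSpace ℝ E₁] [AddCommGroup V] [Module ℝ V]

/-- Lions' approximation condition for the couple `(E₀, E₁)`. -/
def LionsCondition (i₀ : E₀ →ₗ[ℝ] V) (i₁ : E₁ →ₗ[ℝ] V) : Prop :=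
  ∃ P : ℕ → V →ₗ[ℝ] V,
    (∀ (n : ℕ) (a : E₀), einterNorm i₀ i₁ (P n (i₀ a)) ≠ ∞) ∧
    (∀ (n : ℕ) (b : E₁), einterNorm i₀ i₁ (P n (i₁ b)) ≠ ∞) ∧
    (∀ a : E₀, Filter.Tendsto (fun n => enormOf i₀ (P n (i₀ a) - i₀ a)) Filter.atTop (nhds 0)) ∧
    (∀ b : E₁, Filter.Tendsto (fun n => enormOf i₁ (P n (i₁ b) - i₁ b)) Filter.atTop (nhds 0))

/-- Persson's approximation condition for the couple `(E₀, E₁)`. -/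
def PerssonCondition (i₀ : E₀ →ₗ[ℝ] V) (i₁ : E₁ →ₗ[ℝ] V) : Prop :=
  ∀ K : Set E₀, IsCompact K →
    ∃ (C : ℝ) (P : Set (V →ₗ[ℝ] V)), 0 < C ∧
      (∀ p ∈ P,
        (∀ a : E₀, einterNorm i₀ i₁ (p (i₀ a)) ≠ ∞ ∧
          enormOf i₀ (p (i₀ a)) ≤ ENNReal.ofReal (C * ‖a‖)) ∧
        (∀ b : E₁, einterNorm i₀ i₁ (p (i₁ b)) ≠ ∞ ∧
          enormOf i₁ (p (i₁ b)) ≤ ENNReal.ofReal (C * ‖b‖))) ∧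
      (∀ ε > 0, ∃ p ∈ P, ∀ x ∈ K, enormOf i₀ (p (i₀ x) - i₀ x) < ENNReal.ofReal ε)

end LP

end

/-!
Everything is governed by the kernel `k(t) = min(1, 1/t) ρ̄(t)`, which is submultiplicative on each
of `(0, 1]` and `[1, ∞)`. A submultiplicative function that is integrable for `dt/t` drops below
`1` somewhere, hence decays geometrically along powers of `2`: `(k(2ⁿ))ₙ` lies in `ℓᵖ(ℤ)` for every
`p > 0`.

For `K ≤ C J`, the estimate `K(s, u)/ρ(s) ≤ k(t/s) J(t, u)/ρ(t)` summed over a representation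
`x = ∑ uₘ` bounds `K(2ⁿ, x)/ρ(2ⁿ)` by the convolution of `k(2ᵏ)` with `J(2ᵐ, uₘ)/ρ(2ᵐ)`, and
convolution with a sequence in `⋂ ℓᵖ` is bounded on `ℓ^q`, even for `q < 1`.

For `J ≤ 6 K`, take decompositions `x = aₙ + bₙ` that are optimal up to a factor `2` at scale `2ⁿ`
and telescope: `uₙ = aₙ₊₁ - aₙ = bₙ - bₙ₊₁`. If `K(1, x) = 0` such decompositions need not exist,
but `x` then decomposes with any prescribed sequence of positive errors, so its `J`-norm vanishes
too.
-/

section Submultiplicative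

lemma summable_of_submultiplicative_of_lt_one {u : ℕ → ℝ} (hu : ∀ n, 0 ≤ u n)
    (hmul : ∀ m n, u (m + n) ≤ u m * u n) {N : ℕ} (hN : u N < 1) : Summable u := by
  refine summable_of_sum_range_le (c := (∑ i ∈ Finset.range N, u i) / (1 - u N)) hu fun M => ?_
  rw [le_div_iff₀ (sub_pos.2 hN)]
  have extend : ∑ i ∈ Finset.range M, u i ≤ ∑ i ∈ Finset.range (N + M), u i :=
    Finset.sum_le_sum_of_subset_of_nonneg (Finset.range_subset_range.2 (Nat.le_add_left M N))
      fun i _ _ => hu i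
  have shift : ∑ i ∈ Finset.range M, u (N + i) ≤ u N * ∑ i ∈ Finset.range M, u i := by
    rw [Finset.mul_sum]
    exact Finset.sum_le_sum fun i _ => hmul N i
  rw [Finset.sum_range_add] at extend
  linarith

variable {f : ℝ → ℝ}

-- If `f L ≥ 1`, then `f s * f (L - s) ≥ 1` and so `f s + f (L - s) ≥ 2`; integrating this over
-- `[0, L]` gives `∫ f ≥ L`.
lemma lt_one_of_submultiplicative_of_integral_lt (hf : ∀ s, 0 ≤ s → 0 ≤ f s)
    (hmul : ∀ s t, 0 ≤ s → 0 ≤ t → f (s + t) ≤ f s * f t) (hint : IntegrableOn f (Ioi 0))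
    {L : ℝ} (hL : ∫ s in Ioi 0, f s < L) : f L < 1 := by
  by_contra! one_le
  have L_nonneg : 0 ≤ L := (setIntegral_nonneg measurableSet_Ioi fun s hs => hf s hs.le).trans hL.le
  have hint₀ : IntervalIntegrable f volume 0 L :=
    (intervalIntegrable_iff_integrableOn_Ioc_of_le L_nonneg).2 (hint.mono_set Ioc_subset_Ioi_self)
  have hint₁ : IntervalIntegrable (fun s => f (L - s)) volume 0 L := by
    simpa using (hint₀.comp_sub_left L).symm
  have two_le : ∀ s ∈ Icc 0 L, 2 ≤ f s + f (L - s) := fun s ⟨hs, hsL⟩ => by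
    have := hmul s (L - s) hs (sub_nonneg.2 hsL)
    rw [add_sub_cancel] at this
    nlinarith [hf s hs, hf (L - s) (sub_nonneg.2 hsL), sq_nonneg (f s - f (L - s))]
  have integrated := intervalIntegral.integral_mono_on L_nonneg intervalIntegrable_const
    (hint₀.add hint₁) two_le
  rw [intervalIntegral.integral_add hint₀ hint₁, intervalIntegral.integral_comp_sub_left,
    sub_self, sub_zero, intervalIntegral.integral_const, sub_zero, smul_eq_mul] at integrated
  have restrict : ∫ s in (0 : ℝ)..L, f s ≤ ∫ s in Ioi 0, f s := by
    rw [intervalIntegral.integral_of_le L_nonneg]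
    exact setIntegral_mono_set hint
      ((ae_restrict_iff' measurableSet_Ioi).2 (ae_of_all _ fun s hs => hf s (le_of_lt hs)))
      (ae_of_all _ Ioc_subset_Ioi_self)
  linarith

lemma summable_rpow_of_submultiplicative_of_integrableOn (hf : ∀ s, 0 ≤ s → 0 ≤ f s)
    (hmul : ∀ s t, 0 ≤ s → 0 ≤ t → f (s + t) ≤ f s * f t) (hint : IntegrableOn f (Ioi 0))
    {h p : ℝ} (hh : 0 < h) (hp : 0 < p) : Summable fun n : ℕ => f (n * h) ^ p := by
  have hf' : ∀ n : ℕ, 0 ≤ f (n * h) := fun n => hf _ (by positivity)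
  obtain ⟨N, hN⟩ := exists_nat_gt ((∫ s in Ioi 0, f s) / h)
  rw [div_lt_iff₀ hh] at hN
  refine summable_of_submultiplicative_of_lt_one (fun n => Real.rpow_nonneg (hf' n) p)
    (fun m n => ?_) (Real.rpow_lt_one (hf' N)
      (lt_one_of_submultiplicative_of_integral_lt hf hmul hint hN) hp)
  rw [← Real.mul_rpow (hf' m) (hf' n), Nat.cast_add, add_mul]
  exact Real.rpow_le_rpow (hf _ (by positivity)) (hmul _ _ (by positivity) (by positivity)) hp.le

end Submultiplicative

section FunctionParameter

variable {ρ : ℝ → ℝ} {s t : ℝ}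

lemma IsClassB.apply_mul_le (hρ : IsClassB ρ) (hs : 0 < s) (ht : 0 < t) :
    ρ (s * t) ≤ rbar ρ s * ρ t := by
  rw [← div_le_iff₀ (hρ.pos t ht)]
  exact le_csSup (hρ.bdd s hs) ⟨t, ht, rfl⟩

lemma IsClassB.apply_le_rbar (hρ : IsClassB ρ) (hs : 0 < s) : ρ s ≤ rbar ρ s := by
  simpa [hρ.one] using hρ.apply_mul_le hs one_pos

lemma IsClassB.rbar_pos (hρ : IsClassB ρ) (hs : 0 < s) : 0 < rbar ρ s :=
  (hρ.pos s hs).trans_le (hρ.apply_le_rbar hs)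

lemma IsClassB.inv_apply_le_rbar_inv (hρ : IsClassB ρ) (hs : 0 < s) : (ρ s)⁻¹ ≤ rbar ρ s⁻¹ := by
  have := hρ.apply_mul_le (inv_pos.2 hs) hs
  rwa [inv_mul_cancel₀ hs.ne', hρ.one, ← div_le_iff₀ (hρ.pos s hs), one_div] at this

lemma IsClassB.rbar_mul_le (hρ : IsClassB ρ) (hs : 0 < s) (ht : 0 < t) :
    rbar ρ (s * t) ≤ rbar ρ s * rbar ρ t := by
  refine csSup_le ⟨_, 1, one_pos, rfl⟩ ?_
  rintro _ ⟨v, hv, rfl⟩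
  rw [div_le_iff₀ (hρ.pos v hv)]
  calc ρ (s * t * v) = ρ (s * (t * v)) := by rw [mul_assoc]
    _ ≤ rbar ρ s * ρ (t * v) := hρ.apply_mul_le hs (mul_pos ht hv)
    _ ≤ rbar ρ s * (rbar ρ t * ρ v) :=
      mul_le_mul_of_nonneg_left (hρ.apply_mul_le ht hv) (hρ.rbar_pos hs).le
    _ = rbar ρ s * rbar ρ t * ρ v := (mul_assoc _ _ _).symm

/-- The kernel `min(1, 1/t) ρ̄(t)`, whose integrability for `dt/t` defines the class `ℬ^{+−}`. It is
the factor lost when a `J`-functional at scale `s * t` is used to bound a `K`-functional at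
scale `s`. -/
noncomputable def dilationKernel (ρ : ℝ → ℝ) (t : ℝ) : ℝ := min 1 t⁻¹ * rbar ρ t

lemma IsClassB.dilationKernel_pos (hρ : IsClassB ρ) (ht : 0 < t) : 0 < dilationKernel ρ t :=
  mul_pos (lt_min one_pos (inv_pos.2 ht)) (hρ.rbar_pos ht)

lemma dilationKernel_of_one_le (ht : 1 ≤ t) : dilationKernel ρ t = t⁻¹ * rbar ρ t := by
  rw [dilationKernel, min_eq_right (inv_le_one_of_one_le₀ ht)]

lemma dilationKernel_of_le_one (ht₀ : 0 < t) (ht : t ≤ 1) : dilationKernel ρ t = rbar ρ t := by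
  rw [dilationKernel, min_eq_left ((one_le_inv₀ ht₀).2 ht), one_mul]

lemma IsClassB.dilationKernel_mul_le_of_one_le (hρ : IsClassB ρ) (hs : 1 ≤ s) (ht : 1 ≤ t) :
    dilationKernel ρ (s * t) ≤ dilationKernel ρ s * dilationKernel ρ t := by
  have hs₀ : 0 < s := one_pos.trans_le hs
  have ht₀ : 0 < t := one_pos.trans_le ht
  rw [dilationKernel_of_one_le hs, dilationKernel_of_one_le ht,
    dilationKernel_of_one_le (one_le_mul_of_one_le_of_one_le hs ht), mul_inv, mul_mul_mul_comm]
  gcongr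
  exact hρ.rbar_mul_le hs₀ ht₀

lemma IsClassB.dilationKernel_mul_le_of_le_one (hρ : IsClassB ρ) (hs₀ : 0 < s) (hs : s ≤ 1)
    (ht₀ : 0 < t) (ht : t ≤ 1) :
    dilationKernel ρ (s * t) ≤ dilationKernel ρ s * dilationKernel ρ t := by
  rw [dilationKernel_of_le_one hs₀ hs, dilationKernel_of_le_one ht₀ ht,
    dilationKernel_of_le_one (mul_pos hs₀ ht₀) (mul_le_one₀ hs ht₀.le ht)]
  exact hρ.rbar_mul_le hs₀ ht₀

lemma IsClassBpm.integrable_dilationKernel_exp (hρ : IsClassBpm ρ) :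
    Integrable fun s => dilationKernel ρ (Real.exp s) := by
  have hint := hρ.integ
  rw [← Real.range_exp, ← image_univ, integrableOn_image_iff_integrableOn_abs_deriv_smul
    MeasurableSet.univ (fun x _ => (Real.hasDerivAt_exp x).hasDerivWithinAt)
    Real.exp_injective.injOn, integrableOn_univ] at hint
  refine hint.congr (ae_of_all _ fun s => ?_)
  beta_reduce
  rw [Real.abs_exp, smul_eq_mul, mul_comm, inv_mul_cancel_right₀ (Real.exp_pos s).ne',
    dilationKernel]

lemma IsClassBpm.summable_dilationKernel_zpow_rpow (hρ : IsClassBpm ρ) {p : ℝ} (hp : 0 < p) :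
    Summable fun n : ℤ => dilationKernel ρ ((2 : ℝ) ^ n) ^ p := by
  have log_two_pos : 0 < Real.log 2 := Real.log_pos one_lt_two
  have exp_mul_log_two (n : ℕ) : Real.exp (n * Real.log 2) = 2 ^ n := by
    rw [Real.exp_nat_mul, Real.exp_log two_pos]
  have kernel_nonneg (s : ℝ) : 0 ≤ dilationKernel ρ (Real.exp s) :=
    (hρ.dilationKernel_pos (Real.exp_pos s)).le
  refine Summable.of_nat_of_neg ?_ ?_
  · have := summable_rpow_of_submultiplicative_of_integrableOn
      (f := fun s => dilationKernel ρ (Real.exp s)) (fun s _ => kernel_nonneg s)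
      (fun s t hs ht => by
        simpa only [Real.exp_add] using hρ.dilationKernel_mul_le_of_one_le
          (Real.one_le_exp hs) (Real.one_le_exp ht))
      hρ.integrable_dilationKernel_exp.integrableOn log_two_pos hp
    simpa only [exp_mul_log_two, zpow_natCast] using this
  · have := summable_rpow_of_submultiplicative_of_integrableOn
      (f := fun s => dilationKernel ρ (Real.exp (-s))) (fun s _ => kernel_nonneg (-s))
      (fun s t hs ht => by
        simpa only [neg_add, Real.exp_add] using hρ.dilationKernel_mul_le_of_le_one
          (Real.exp_pos _) (Real.exp_le_one_iff.2 (neg_nonpos.2 hs))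
          (Real.exp_pos _) (Real.exp_le_one_iff.2 (neg_nonpos.2 ht)))
      hρ.integrable_dilationKernel_exp.comp_neg.integrableOn log_two_pos hp
    simpa only [Real.exp_neg, exp_mul_log_two, zpow_neg, zpow_natCast] using this

lemma IsClassBpm.tsum_ofReal_dilationKernel_zpow_rpow_ne_top (hρ : IsClassBpm ρ) {p : ℝ}
    (hp : 0 < p) : ∑' n : ℤ, ENNReal.ofReal (dilationKernel ρ ((2 : ℝ) ^ n)) ^ p ≠ ∞ := by
  have kernel_pos (n : ℤ) : 0 < dilationKernel ρ ((2 : ℝ) ^ n) :=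
    hρ.dilationKernel_pos (by positivity)
  simpa only [ENNReal.ofReal_rpow_of_pos (kernel_pos _)] using
    (hρ.summable_dilationKernel_zpow_rpow hp).tsum_ofReal_ne_top

end FunctionParameter

section SequenceNorm

variable {q : ℝ≥0∞} {a b c : ℤ → ℝ≥0∞}

lemma eLq_mono (h : ∀ n, a n ≤ b n) : eLq q a ≤ eLq q b := by
  unfold eLq
  split_ifs
  · exact iSup_mono h
  · gcongr with n
    exact h n

lemma eLq_const_mul (hq : 0 < q) (r : ℝ≥0∞) (a : ℤ → ℝ≥0∞) :
    eLq q (fun n => r * a n) = r * eLq q a := by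
  unfold eLq
  split_ifs with hq_top
  · rw [ENNReal.mul_iSup]
  · have hq' : 0 < q.toReal := ENNReal.toReal_pos hq.ne' hq_top
    simp only [ENNReal.mul_rpow_of_nonneg _ _ hq'.le]
    rw [ENNReal.tsum_mul_left, ENNReal.mul_rpow_of_nonneg _ _ (by positivity), one_div,
      ENNReal.rpow_rpow_inv hq'.ne']

lemma le_eLq (hq : 0 < q) (a : ℤ → ℝ≥0∞) (n : ℤ) : a n ≤ eLq q a := by
  unfold eLq
  split_ifs with hq_top
  · exact le_iSup a n
  · have hq' : 0 < q.toReal := ENNReal.toReal_pos hq.ne' hq_top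
    rw [one_div, ENNReal.le_rpow_inv_iff hq']
    exact ENNReal.le_tsum (f := fun n => a n ^ q.toReal) n

lemma eLq_ne_top_of_tsum_rpow_ne_top (hc : ∀ p : ℝ, 0 < p → ∑' n, c n ^ p ≠ ∞) (hq : 0 < q) :
    eLq q c ≠ ∞ := by
  unfold eLq
  split_ifs with hq_top
  · have hsum : ∑' n, c n ≠ ∞ := by simpa using hc 1 one_pos
    exact ne_top_of_le_ne_top hsum (iSup_le ENNReal.le_tsum)
  · exact ENNReal.rpow_ne_top_of_nonneg (by positivity)
      (hc _ (ENNReal.toReal_pos hq.ne' hq_top))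

-- Bounding each `c k ^ (1 / 2) * b k` by the `r`-th root of the last sum replaces Hölder's
-- inequality, which is not available for `r < 1`.
lemma tsum_mul_rpow_le {ι : Type*} (c b : ι → ℝ≥0∞) {r : ℝ} (hr : 0 < r) :
    (∑' k, c k * b k) ^ r ≤ (∑' k, c k ^ (1 / 2 : ℝ)) ^ r * ∑' k, c k ^ (r / 2) * b k ^ r := by
  have factor (k : ι) : c k * b k = c k ^ (1 / 2 : ℝ) * (c k ^ (r / 2) * b k ^ r) ^ r⁻¹ := by
    rw [ENNReal.mul_rpow_of_nonneg _ _ (inv_nonneg.2 hr.le), ENNReal.rpow_rpow_inv hr.ne',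
      ← ENNReal.rpow_mul, show r / 2 * r⁻¹ = 1 / 2 by field_simp, ← mul_assoc,
      ← ENNReal.rpow_add_of_nonneg _ _ (by norm_num) (by norm_num), add_halves, ENNReal.rpow_one]
  rw [← ENNReal.le_rpow_inv_iff hr, ENNReal.mul_rpow_of_nonneg _ _ (inv_nonneg.2 hr.le),
    ENNReal.rpow_rpow_inv hr.ne', ← ENNReal.tsum_mul_right]
  refine ENNReal.tsum_le_tsum fun k => ?_
  rw [factor]
  gcongr
  exact ENNReal.le_tsum (f := fun k => c k ^ (r / 2) * b k ^ r) k

lemma tsum_convolution_rpow_le (c a : ℤ → ℝ≥0∞) {r : ℝ} (hr : 0 < r) :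
    ∑' n, (∑' k, c k * a (n + k)) ^ r ≤
      (∑' k, c k ^ (1 / 2 : ℝ)) ^ r * (∑' k, c k ^ (r / 2)) * ∑' n, a n ^ r :=
  calc ∑' n, (∑' k, c k * a (n + k)) ^ r
      ≤ ∑' n, (∑' k, c k ^ (1 / 2 : ℝ)) ^ r * ∑' k, c k ^ (r / 2) * a (n + k) ^ r :=
        ENNReal.tsum_le_tsum fun n => tsum_mul_rpow_le c (fun k => a (n + k)) hr
    _ = (∑' k, c k ^ (1 / 2 : ℝ)) ^ r * ∑' k, c k ^ (r / 2) * ∑' n, a (n + k) ^ r := by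
        simp only [ENNReal.tsum_mul_left]
        rw [ENNReal.tsum_comm]
        simp only [ENNReal.tsum_mul_left]
    _ = (∑' k, c k ^ (1 / 2 : ℝ)) ^ r * ∑' k, c k ^ (r / 2) * ∑' n, a n ^ r := by
        congr! 4 with k
        exact (Equiv.addRight k).tsum_eq fun n => a n ^ r
    _ = (∑' k, c k ^ (1 / 2 : ℝ)) ^ r * (∑' k, c k ^ (r / 2)) * ∑' n, a n ^ r := by
        rw [ENNReal.tsum_mul_right, mul_assoc]

lemma exists_eLq_convolution_le (hc : ∀ p : ℝ, 0 < p → ∑' k, c k ^ p ≠ ∞) (hq : 0 < q) :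
    ∃ C : ℝ≥0∞, C ≠ ∞ ∧ ∀ a, eLq q (fun n => ∑' k, c k * a (n + k)) ≤ C * eLq q a := by
  rcases eq_or_ne q ∞ with rfl | hq_top
  · refine ⟨∑' k, c k, by simpa using hc 1 one_pos, fun a => ?_⟩
    simp only [eLq, if_true]
    refine iSup_le fun n => ?_
    rw [← ENNReal.tsum_mul_right]
    gcongr
    exact le_iSup a _
  · have hr : 0 < q.toReal := ENNReal.toReal_pos hq.ne' hq_top
    refine ⟨((∑' k, c k ^ (1 / 2 : ℝ)) ^ q.toReal * ∑' k, c k ^ (q.toReal / 2)) ^ (1 / q.toReal),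
      ENNReal.rpow_ne_top_of_nonneg (by positivity) (ENNReal.mul_ne_top
        (ENNReal.rpow_ne_top_of_nonneg hr.le (hc _ (by norm_num))) (hc _ (by positivity))),
      fun a => ?_⟩
    simp only [eLq, hq_top, if_false]
    rw [← ENNReal.mul_rpow_of_nonneg _ _ (by positivity)]
    gcongr
    exact tsum_convolution_rpow_le c a hr

end SequenceNorm

lemma apply_sub_sum_le_tsum_compl {ι κ V : Type*} [AddCommGroup V] {N : V → ℝ≥0∞}
    (N_zero : N 0 = 0) (N_add : ∀ x y, N (x + y) ≤ N x + N y) {u : ι → V} {x : V}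
    {l : Filter κ} [l.NeBot] {F : κ → Finset ι} (hF : Tendsto F l atTop)
    (hlim : Tendsto (fun k => N (x - ∑ n ∈ F k, u n)) l (nhds 0)) (G : Finset ι) :
    N (x - ∑ n ∈ G, u n) ≤ ∑' n : {n // n ∉ G}, N (u n) := by
  classical
  have hlim' := hlim.add_const (∑' n : {n // n ∉ G}, N (u n))
  rw [zero_add] at hlim'
  refine ge_of_tendsto hlim' ((hF.eventually_ge_atTop G).mono fun k hGF => ?_)
  have split : x - ∑ n ∈ G, u n = (x - ∑ n ∈ F k, u n) + ∑ n ∈ F k \ G, u n := by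
    rw [← Finset.sum_sdiff hGF]
    abel
  have tail : ∑ n ∈ F k \ G, N (u n) ≤ ∑' n : {n // n ∉ G}, N (u n) := by
    have := ENNReal.sum_le_tsum (f := fun n : {n // n ∉ G} => N (u n)) ((F k).subtype (· ∉ G))
    rwa [Finset.sum_subtype_eq_sum_filter (f := fun n => N (u n)),
      Finset.filter_notMem_eq_sdiff] at this
  calc N (x - ∑ n ∈ G, u n)
      ≤ N (x - ∑ n ∈ F k, u n) + N (∑ n ∈ F k \ G, u n) := split ▸ N_add _ _
    _ ≤ N (x - ∑ n ∈ F k, u n) + ∑' n : {n // n ∉ G}, N (u n) := by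
      gcongr
      exact (Finset.le_sum_of_subadditive N N_zero.le N_add _ _).trans tail

lemma tendsto_norm_add_norm_of_summable {E F : Type*} [SeminormedAddCommGroup E]
    [SeminormedAddCommGroup F] {a : ℤ → E} {b : ℤ → F} {κ : ℤ → ℝ}
    (hab : ∀ n, ‖a n‖ + (2 : ℝ) ^ n * ‖b n‖ ≤ κ n)
    (hsum : Summable fun n : ℤ => min 1 ((2 : ℝ) ^ n)⁻¹ * κ n) :
    Tendsto (fun k : ℕ => ‖a (-k)‖ + ‖b k‖) atTop (nhds 0) := by
  have hlim := hsum.tendsto_cofinite_zero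
  have hlim_pos := hlim.comp (Nat.cast_injective (R := ℤ)).tendsto_cofinite
  have hlim_neg := hlim.comp (neg_injective.comp (Nat.cast_injective (R := ℤ))).tendsto_cofinite
  rw [Nat.cofinite_eq_atTop] at hlim_pos hlim_neg
  have one_le (k : ℕ) : (1 : ℝ) ≤ 2 ^ k := one_le_pow₀ one_le_two
  have norm_a_le (k : ℕ) : ‖a (-k)‖ ≤ min 1 ((2 : ℝ) ^ (-k : ℤ))⁻¹ * κ (-k) := by
    rw [zpow_neg, zpow_natCast, inv_inv, min_eq_left (one_le k), one_mul]
    exact (le_add_of_nonneg_right (by positivity)).trans (hab (-k))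
  have norm_b_le (k : ℕ) : ‖b k‖ ≤ min 1 ((2 : ℝ) ^ (k : ℤ))⁻¹ * κ k := by
    rw [zpow_natCast, min_eq_right (inv_le_one_of_one_le₀ (one_le k)),
      le_inv_mul_iff₀ (by positivity), ← zpow_natCast]
    exact (le_add_of_nonneg_left (norm_nonneg _)).trans (hab k)
  exact squeeze_zero (fun k => by positivity) (fun k => add_le_add (norm_a_le k) (norm_b_le k))
    (by simpa using hlim_neg.add hlim_pos)

section Couple

variable {E₀ E₁ V : Type*} [NormedAddCommGroup E₀] [NormedSpace ℝ E₀]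
  [NormedAddCommGroup E₁] [NormedSpace ℝ E₁] [AddCommGroup V] [Module ℝ V]
  {i₀ : E₀ →ₗ[ℝ] V} {i₁ : E₁ →ₗ[ℝ] V} {ρ : ℝ → ℝ} {q : ℝ≥0∞} {s t : ℝ} {x : V}

lemma eKfun_map_add_map_le (t : ℝ) (a : E₀) (b : E₁) :
    eKfun i₀ i₁ t (i₀ a + i₁ b) ≤ ENNReal.ofReal (‖a‖ + t * ‖b‖) :=
  iInf_le_of_le a (iInf_le_of_le b (iInf_le_of_le rfl le_rfl))

lemma eKfun_zero (t : ℝ) : eKfun i₀ i₁ t 0 = 0 := by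
  simpa using eKfun_map_add_map_le (i₀ := i₀) (i₁ := i₁) t 0 0

lemma exists_add_eq_of_eKfun_lt {r : ℝ} (hr : eKfun i₀ i₁ t x < ENNReal.ofReal r) :
    ∃ a b, x = i₀ a + i₁ b ∧ ‖a‖ + t * ‖b‖ < r := by
  simp only [eKfun, iInf_lt_iff] at hr
  obtain ⟨a, b, hx, hab⟩ := hr
  exact ⟨a, b, hx, (ENNReal.ofReal_lt_ofReal_iff'.1 hab).1⟩

lemma eKfun_add_le (ht : 0 ≤ t) (x y : V) :
    eKfun i₀ i₁ t (x + y) ≤ eKfun i₀ i₁ t x + eKfun i₀ i₁ t y := by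
  rw [eKfun.eq_1 i₀ i₁ t x, eKfun.eq_1 i₀ i₁ t y]
  simp only [ENNReal.iInf_add, ENNReal.add_iInf, le_iInf_iff]
  rintro a' b' rfl a b rfl
  rw [add_add_add_comm, ← map_add, ← map_add, ← ENNReal.ofReal_add (by positivity) (by positivity)]
  refine (eKfun_map_add_map_le t _ _).trans (ENNReal.ofReal_le_ofReal ?_)
  rw [add_add_add_comm, ← mul_add]
  gcongr <;> exact norm_add_le _ _

lemma eKfun_le_max_mul (hs : 0 < s) (t : ℝ) (x : V) :
    eKfun i₀ i₁ t x ≤ ENNReal.ofReal (max 1 (t / s)) * eKfun i₀ i₁ s x := by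
  have max_pos : 0 < max 1 (t / s) := lt_max_of_lt_left one_pos
  simp only [eKfun.eq_1 i₀ i₁ s, ENNReal.mul_iInf_of_ne (ENNReal.ofReal_pos.2 max_pos).ne'
    ENNReal.ofReal_ne_top, le_iInf_iff, ← ENNReal.ofReal_mul max_pos.le]
  rintro a b rfl
  refine (eKfun_map_add_map_le t a b).trans (ENNReal.ofReal_le_ofReal ?_)
  calc ‖a‖ + t * ‖b‖ = 1 * ‖a‖ + t / s * (s * ‖b‖) := by field_simp
    _ ≤ max 1 (t / s) * ‖a‖ + max 1 (t / s) * (s * ‖b‖) := by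
      gcongr
      · exact le_max_left _ _
      · exact le_max_right _ _
    _ = max 1 (t / s) * (‖a‖ + s * ‖b‖) := (mul_add _ _ _).symm

lemma eKfun_le_min_mul_max (hs : 0 ≤ s) (ht : 0 < t) {a : E₀} {b : E₁} (hab : i₀ a = i₁ b) :
    eKfun i₀ i₁ s (i₀ a) ≤ ENNReal.ofReal (min 1 (s / t) * max ‖a‖ (t * ‖b‖)) := by
  rw [min_mul_of_nonneg _ _ (le_max_of_le_left (norm_nonneg a)), ENNReal.ofReal_min]
  refine le_min ?_ ?_
  · have := eKfun_map_add_map_le (i₀ := i₀) (i₁ := i₁) s a 0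
    simp only [map_zero, add_zero, norm_zero, mul_zero] at this
    refine this.trans (ENNReal.ofReal_le_ofReal ?_)
    rw [one_mul]
    exact le_max_left _ _
  · have := eKfun_map_add_map_le (i₀ := i₀) (i₁ := i₁) s 0 b
    simp only [map_zero, zero_add, norm_zero] at this
    refine hab ▸ this.trans (ENNReal.ofReal_le_ofReal ?_)
    calc s * ‖b‖ = s / t * (t * ‖b‖) := by field_simp
      _ ≤ s / t * max ‖a‖ (t * ‖b‖) := by
        gcongr
        exact le_max_right _ _

lemma IsJRep.eKfun_le_tsum {a : ℤ → E₀} {b : ℤ → E₁} (hrep : IsJRep i₀ i₁ x a b) (ht : 0 ≤ t) :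
    eKfun i₀ i₁ t x ≤ ∑' m, eKfun i₀ i₁ t (i₀ (a m)) := by
  refine ENNReal.le_of_forall_pos_le_add fun ε hε _ => ?_
  have max_pos : 0 < max 1 (t / 1) := lt_max_of_lt_left one_pos
  obtain ⟨F, hF⟩ := hrep.2 (ε / max 1 (t / 1)) (by positivity)
  set y := ∑ n ∈ F, i₀ (a n)
  have head : eKfun i₀ i₁ t y ≤ ∑' m, eKfun i₀ i₁ t (i₀ (a m)) :=
    (Finset.le_sum_of_subadditive _ (eKfun_zero t).le (eKfun_add_le ht) F _).trans
      (ENNReal.sum_le_tsum F)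
  have remainder : eKfun i₀ i₁ t (x - y) ≤ ε :=
    calc eKfun i₀ i₁ t (x - y)
        ≤ ENNReal.ofReal (max 1 (t / 1)) * eKfun i₀ i₁ 1 (x - y) :=
          eKfun_le_max_mul one_pos t (x - y)
      _ ≤ ENNReal.ofReal (max 1 (t / 1)) * ENNReal.ofReal (ε / max 1 (t / 1)) := by
          gcongr
          exact (hF F subset_rfl).le
      _ = ε := by
          rw [← ENNReal.ofReal_mul max_pos.le, mul_div_cancel₀ _ max_pos.ne',
            ENNReal.ofReal_coe_nnreal]
  calc eKfun i₀ i₁ t x = eKfun i₀ i₁ t (y + (x - y)) := by rw [add_sub_cancel]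
    _ ≤ eKfun i₀ i₁ t y + eKfun i₀ i₁ t (x - y) := eKfun_add_le ht _ _
    _ ≤ ∑' m, eKfun i₀ i₁ t (i₀ (a m)) + ε := add_le_add head remainder

lemma IsClassB.eKfun_div_le_dilationKernel_mul (hρ : IsClassB ρ) (hs : 0 < s) (ht : 0 < t)
    {a : E₀} {b : E₁} (hab : i₀ a = i₁ b) :
    eKfun i₀ i₁ s (i₀ a) / ENNReal.ofReal (ρ s) ≤
      ENNReal.ofReal (dilationKernel ρ (t / s)) *
        ENNReal.ofReal (max ‖a‖ (t * ‖b‖) / ρ t) := by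
  have hρs : 0 < ρ s := hρ.pos s hs
  have hρt : 0 < ρ t := hρ.pos t ht
  have ratio : (ρ s)⁻¹ ≤ rbar ρ (t / s) / ρ t := by
    have := hρ.apply_mul_le (div_pos ht hs) hs
    rw [div_mul_cancel₀ _ hs.ne'] at this
    rw [inv_le_iff_one_le_mul₀ hρs, div_mul_eq_mul_div, one_le_div hρt]
    exact this
  rw [← ENNReal.ofReal_mul (hρ.dilationKernel_pos (div_pos ht hs)).le]
  refine (ENNReal.div_le_div_right (eKfun_le_min_mul_max hs.le ht hab) _).trans ?_
  rw [← ENNReal.ofReal_div_of_pos hρs]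
  refine ENNReal.ofReal_le_ofReal ?_
  calc min 1 (s / t) * max ‖a‖ (t * ‖b‖) / ρ s
      ≤ min 1 (s / t) * max ‖a‖ (t * ‖b‖) * (rbar ρ (t / s) / ρ t) := by
        rw [div_eq_mul_inv]
        gcongr
    _ = dilationKernel ρ (t / s) * (max ‖a‖ (t * ‖b‖) / ρ t) := by
        rw [dilationKernel, inv_div]
        ring

lemma le_mul_eJNorm_of_forall_isJRep {N C : ℝ≥0∞} (hC₀ : C ≠ 0) (hC : C ≠ ∞)
    (h : ∀ a b, IsJRep i₀ i₁ x a b → N ≤ C * eLq q fun n =>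
      ENNReal.ofReal (max ‖a n‖ ((2 : ℝ) ^ n * ‖b n‖) / ρ ((2 : ℝ) ^ n))) :
    N ≤ C * eJNorm i₀ i₁ ρ q x := by
  simpa only [eJNorm, ENNReal.mul_iInf_of_ne hC₀ hC, le_iInf_iff] using h

lemma IsClassBpm.exists_eKNorm_le_mul_eJNorm (i₀ : E₀ →ₗ[ℝ] V) (i₁ : E₁ →ₗ[ℝ] V)
    (hρ : IsClassBpm ρ) (hq : 0 < q) :
    ∃ C : ℝ≥0∞, C ≠ ∞ ∧ ∀ x, eKNorm i₀ i₁ ρ q x ≤ C * eJNorm i₀ i₁ ρ q x := by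
  obtain ⟨C, hC, convolution_le⟩ := exists_eLq_convolution_le
    (fun p hp => hρ.tsum_ofReal_dilationKernel_zpow_rpow_ne_top hp) hq
  refine ⟨C + 1, by simp [hC], fun x => le_mul_eJNorm_of_forall_isJRep (by simp) (by simp [hC])
    fun a b hrep => le_trans (eLq_mono fun n => ?_) ((convolution_le _).trans
      (mul_le_mul_left le_self_add _))⟩
  calc eKfun i₀ i₁ ((2 : ℝ) ^ n) x / ENNReal.ofReal (ρ ((2 : ℝ) ^ n))
      ≤ (∑' m, eKfun i₀ i₁ ((2 : ℝ) ^ n) (i₀ (a m))) / ENNReal.ofReal (ρ ((2 : ℝ) ^ n)) := by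
        gcongr
        exact hrep.eKfun_le_tsum (by positivity)
    _ = ∑' k, eKfun i₀ i₁ ((2 : ℝ) ^ n) (i₀ (a (n + k))) / ENNReal.ofReal (ρ ((2 : ℝ) ^ n)) := by
        simp only [div_eq_mul_inv]
        rw [ENNReal.tsum_mul_right, ← (Equiv.addLeft n).tsum_eq]
        rfl
    _ ≤ _ := ENNReal.tsum_le_tsum fun k => by
        have := hρ.eKfun_div_le_dilationKernel_mul (s := (2 : ℝ) ^ n) (t := (2 : ℝ) ^ (n + k))
          (by positivity) (by positivity) (hrep.1 (n + k))
        rwa [zpow_add₀ two_ne_zero, mul_div_cancel_left₀ _ (by positivity),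
          ← zpow_add₀ two_ne_zero] at this

lemma map_sub_eq_map_sub_of_add_eq_add {a a' : E₀} {b b' : E₁}
    (h : i₀ a + i₁ b = i₀ a' + i₁ b') : i₀ (a' - a) = i₁ (b - b') := by
  rw [map_sub, map_sub, sub_eq_sub_iff_add_eq_add, ← h, add_comm]

lemma isJRep_of_decomposition {a : ℤ → E₀} {b : ℤ → E₁} (hx : ∀ n, x = i₀ (a n) + i₁ (b n))
    (hlim : Tendsto (fun k : ℕ => ‖a (-k)‖ + ‖b k‖) atTop (nhds 0))
    (hsum : ∑' n, esumNorm i₀ i₁ (i₀ (a (n + 1) - a n)) ≠ ∞) :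
    IsJRep i₀ i₁ x (fun n => a (n + 1) - a n) fun n => b n - b (n + 1) := by
  have hab (n : ℤ) : i₀ (a (n + 1) - a n) = i₁ (b n - b (n + 1)) :=
    map_sub_eq_map_sub_of_add_eq_add ((hx n).symm.trans (hx (n + 1)))
  have remainder (k : ℕ) : x - ∑ n ∈ Finset.Ico (-k : ℤ) k, i₀ (a (n + 1) - a n) =
      i₀ (a (-k)) + i₁ (b k) := by
    simp only [hab, map_sub]
    rw [Finset.sum_Ico_int_sub k fun n => i₁ (b n), hx (-k)]
    abel
  have remainder_tendsto : Tendsto (fun k : ℕ => esumNorm i₀ i₁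
      (x - ∑ n ∈ Finset.Ico (-k : ℤ) k, i₀ (a (n + 1) - a n))) atTop (nhds 0) := by
    have hlim' := ENNReal.tendsto_ofReal hlim
    rw [ENNReal.ofReal_zero] at hlim'
    refine tendsto_of_tendsto_of_tendsto_of_le_of_le tendsto_const_nhds hlim'
      (fun _ => zero_le) fun k => ?_
    rw [remainder, esumNorm]
    exact (eKfun_map_add_map_le 1 _ _).trans_eq (by rw [one_mul])
  refine ⟨hab, fun ε hε => ?_⟩
  obtain ⟨F, hF⟩ := eventually_atTop.1 ((ENNReal.tendsto_tsum_compl_atTop_zero hsum).eventually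
    (gt_mem_nhds (ENNReal.ofReal_pos.2 hε)))
  exact ⟨F, fun G hFG => (apply_sub_sum_le_tsum_compl (eKfun_zero 1)
    (eKfun_add_le zero_le_one) Finset.tendsto_Ico_neg remainder_tendsto G).trans_lt (hF G hFG)⟩

lemma exists_isJRep_of_eKfun_lt {κ : ℤ → ℝ}
    (hK : ∀ n, eKfun i₀ i₁ ((2 : ℝ) ^ n) x < ENNReal.ofReal (κ n))
    (hdouble : ∀ n, κ (n + 1) ≤ 2 * κ n)
    (hsum : Summable fun n : ℤ => min 1 ((2 : ℝ) ^ n)⁻¹ * κ n) :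
    ∃ a b, IsJRep i₀ i₁ x a b ∧ ∀ n, max ‖a n‖ ((2 : ℝ) ^ n * ‖b n‖) ≤ 3 * κ n := by
  choose a b hx hab using fun n => exists_add_eq_of_eKfun_lt (hK n)
  have norm_le (n : ℤ) :
      max ‖a (n + 1) - a n‖ ((2 : ℝ) ^ n * ‖b n - b (n + 1)‖) ≤ 3 * κ n := by
    have next := hab (n + 1)
    rw [zpow_add_one₀ two_ne_zero] at next
    have hb : 0 ≤ (2 : ℝ) ^ n * ‖b n‖ := by positivity
    have hb' : 0 ≤ (2 : ℝ) ^ n * ‖b (n + 1)‖ := by positivity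
    refine max_le ?_ ?_
    · linarith [norm_sub_le (a (n + 1)) (a n), hab n, hdouble n]
    · have := mul_le_mul_of_nonneg_left (norm_sub_le (b n) (b (n + 1)))
        (zpow_nonneg zero_le_two n)
      linarith [hab n, hdouble n, norm_nonneg (a n), norm_nonneg (a (n + 1))]
  refine ⟨_, _, isJRep_of_decomposition hx
    (tendsto_norm_add_norm_of_summable (fun n => (hab n).le) hsum) ?_, norm_le⟩
  refine ne_top_of_le_ne_top (hsum.mul_left 3).tsum_ofReal_ne_top
    (ENNReal.tsum_le_tsum fun n => ?_)
  refine (eKfun_le_min_mul_max zero_le_one (zpow_pos two_pos n)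
    (map_sub_eq_map_sub_of_add_eq_add ((hx n).symm.trans (hx (n + 1))))).trans
    (ENNReal.ofReal_le_ofReal ?_)
  rw [one_div, mul_left_comm]
  gcongr
  exact norm_le n

lemma IsClassB.eJNorm_le_of_eKfun_lt (hρ : IsClassB ρ) (hq : 0 < q) {κ : ℤ → ℝ}
    (hK : ∀ n, eKfun i₀ i₁ ((2 : ℝ) ^ n) x < ENNReal.ofReal (κ n))
    (hdouble : ∀ n, κ (n + 1) ≤ 2 * κ n)
    (hsum : Summable fun n : ℤ => min 1 ((2 : ℝ) ^ n)⁻¹ * κ n) :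
    eJNorm i₀ i₁ ρ q x ≤ 3 * eLq q fun n => ENNReal.ofReal (κ n / ρ ((2 : ℝ) ^ n)) := by
  obtain ⟨a, b, hrep, norm_le⟩ := exists_isJRep_of_eKfun_lt hK hdouble hsum
  refine iInf₂_le_of_le a b (iInf_le_of_le hrep ?_)
  rw [← eLq_const_mul hq]
  refine eLq_mono fun n => ?_
  have hρn := hρ.pos ((2 : ℝ) ^ n) (by positivity)
  rw [← ENNReal.ofReal_ofNat, ← ENNReal.ofReal_mul (by norm_num), ← mul_div_assoc]
  gcongr
  exact norm_le n

lemma IsClassB.eKfun_le_eKNorm_mul (hρ : IsClassB ρ) (hq : 0 < q) (n : ℤ) (x : V) :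
    eKfun i₀ i₁ ((2 : ℝ) ^ n) x ≤ eKNorm i₀ i₁ ρ q x * ENNReal.ofReal (ρ ((2 : ℝ) ^ n)) := by
  have hρn := ENNReal.ofReal_pos.2 (hρ.pos ((2 : ℝ) ^ n) (by positivity))
  rw [← ENNReal.div_le_iff hρn.ne' ENNReal.ofReal_ne_top]
  exact le_eLq hq (fun n => eKfun i₀ i₁ ((2 : ℝ) ^ n) x / ENNReal.ofReal (ρ ((2 : ℝ) ^ n))) n

lemma eKfun_ne_zero_of_esumNorm_ne_zero (ht : 0 < t) (hx : esumNorm i₀ i₁ x ≠ 0) :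
    eKfun i₀ i₁ t x ≠ 0 := fun h =>
  hx (nonpos_iff_eq_zero.1 ((eKfun_le_max_mul ht 1 x).trans_eq (by rw [h, mul_zero])))

lemma eKfun_eq_zero_of_esumNorm_eq_zero (t : ℝ) (hx : esumNorm i₀ i₁ x = 0) : eKfun i₀ i₁ t x = 0 :=
  nonpos_iff_eq_zero.1 ((eKfun_le_max_mul one_pos t x).trans_eq (by
    rw [← esumNorm, hx, mul_zero]))

lemma eKfun_two_zpow_succ_le (n : ℤ) (x : V) :
    eKfun i₀ i₁ ((2 : ℝ) ^ (n + 1)) x ≤ 2 * eKfun i₀ i₁ ((2 : ℝ) ^ n) x := by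
  have := eKfun_le_max_mul (i₀ := i₀) (i₁ := i₁) (zpow_pos two_pos n) ((2 : ℝ) ^ (n + 1)) x
  rwa [zpow_add_one₀ two_ne_zero, mul_div_cancel_left₀ _ (by positivity),
    max_eq_right one_le_two, ENNReal.ofReal_ofNat, ← zpow_add_one₀ two_ne_zero] at this

lemma IsClassBpm.summable_min_one_inv_mul_eKfun (hρ : IsClassBpm ρ) (hq : 0 < q)
    (hx : eKNorm i₀ i₁ ρ q x ≠ ∞) :
    Summable fun n : ℤ => min 1 ((2 : ℝ) ^ n)⁻¹ * (eKfun i₀ i₁ ((2 : ℝ) ^ n) x).toReal := by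
  have majorant := (hρ.summable_dilationKernel_zpow_rpow one_pos).mul_left
    (eKNorm i₀ i₁ ρ q x).toReal
  simp only [Real.rpow_one] at majorant
  refine majorant.of_nonneg_of_le (fun n => by positivity) fun n => ?_
  have two_zpow_pos : (0 : ℝ) < 2 ^ n := by positivity
  have K_le : (eKfun i₀ i₁ ((2 : ℝ) ^ n) x).toReal ≤
      (eKNorm i₀ i₁ ρ q x).toReal * ρ ((2 : ℝ) ^ n) := by
    rw [← ENNReal.toReal_ofReal (hρ.pos _ two_zpow_pos).le, ← ENNReal.toReal_mul]
    exact ENNReal.toReal_mono (ENNReal.mul_ne_top hx ENNReal.ofReal_ne_top)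
      (hρ.eKfun_le_eKNorm_mul hq n x)
  calc min 1 ((2 : ℝ) ^ n)⁻¹ * (eKfun i₀ i₁ ((2 : ℝ) ^ n) x).toReal
      ≤ min 1 ((2 : ℝ) ^ n)⁻¹ * ((eKNorm i₀ i₁ ρ q x).toReal * rbar ρ ((2 : ℝ) ^ n)) := by
        gcongr
        exact K_le.trans (by gcongr; exact hρ.apply_le_rbar two_zpow_pos)
    _ = (eKNorm i₀ i₁ ρ q x).toReal * dilationKernel ρ ((2 : ℝ) ^ n) := mul_left_comm _ _ _

lemma IsClassBpm.eJNorm_le_six_mul_eKNorm_of_esumNorm_ne_zero (hρ : IsClassBpm ρ) (hq : 0 < q)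
    (hx : esumNorm i₀ i₁ x ≠ 0) : eJNorm i₀ i₁ ρ q x ≤ 6 * eKNorm i₀ i₁ ρ q x := by
  rcases eq_or_ne (eKNorm i₀ i₁ ρ q x) ∞ with h_top | h_top
  · rw [h_top, ENNReal.mul_top (by norm_num)]
    exact le_top
  set K : ℤ → ℝ≥0∞ := fun n => eKfun i₀ i₁ ((2 : ℝ) ^ n) x
  have K_ne_zero (n : ℤ) : K n ≠ 0 := eKfun_ne_zero_of_esumNorm_ne_zero (by positivity) hx
  have K_ne_top (n : ℤ) : K n ≠ ∞ := ne_top_of_le_ne_top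
    (ENNReal.mul_ne_top h_top ENNReal.ofReal_ne_top) (hρ.eKfun_le_eKNorm_mul hq n x)
  have ofReal_two_mul (n : ℤ) : ENNReal.ofReal (2 * (K n).toReal) = 2 * K n := by
    rw [ENNReal.ofReal_mul zero_le_two, ENNReal.ofReal_toReal (K_ne_top n), ENNReal.ofReal_ofNat]
  have doubling (n : ℤ) : (K (n + 1)).toReal ≤ 2 * (K n).toReal := by
    have := ENNReal.toReal_mono (ENNReal.mul_ne_top ENNReal.ofNat_ne_top (K_ne_top n))
      (eKfun_two_zpow_succ_le n x)
    rwa [ENNReal.toReal_mul, ENNReal.toReal_ofNat] at this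
  have lt_two_mul (n : ℤ) : K n < ENNReal.ofReal (2 * (K n).toReal) := by
    rw [ofReal_two_mul, two_mul]
    exact ENNReal.lt_add_right (K_ne_top n) (K_ne_zero n)
  refine (hρ.eJNorm_le_of_eKfun_lt hq lt_two_mul (fun n => by gcongr; exact doubling n)
    (by simpa only [mul_left_comm] using
      (hρ.summable_min_one_inv_mul_eKfun hq h_top).mul_left 2)).trans_eq ?_
  simp only [ENNReal.ofReal_div_of_pos (hρ.pos _ (zpow_pos two_pos _)), ofReal_two_mul]
  simp only [mul_div_assoc, eLq_const_mul hq]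
  change 3 * (2 * eKNorm i₀ i₁ ρ q x) = 6 * eKNorm i₀ i₁ ρ q x
  rw [← mul_assoc]
  norm_num

lemma summable_min_one_inv_zpow_mul_min_one_zpow :
    Summable fun n : ℤ => min 1 ((2 : ℝ) ^ n)⁻¹ * min 1 ((2 : ℝ) ^ n) := by
  have geometric : Summable fun n : ℕ => ((2 : ℝ) ^ n)⁻¹ := by
    simpa using summable_geometric_two
  have one_le (n : ℕ) : (1 : ℝ) ≤ 2 ^ n := one_le_pow₀ one_le_two
  refine Summable.of_nat_of_neg (geometric.congr fun n => ?_) (geometric.congr fun n => ?_)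
  · rw [zpow_natCast, min_eq_left (one_le n), min_eq_right (inv_le_one_of_one_le₀ (one_le n)),
      mul_one]
  · rw [zpow_neg, zpow_natCast, inv_inv, min_eq_left (one_le n),
      min_eq_right (inv_le_one_of_one_le₀ (one_le n)), one_mul]

lemma IsClassBpm.eLq_min_one_div_ne_top (hρ : IsClassBpm ρ) (hq : 0 < q) :
    eLq q (fun n => ENNReal.ofReal (min 1 ((2 : ℝ) ^ n) / ρ ((2 : ℝ) ^ n))) ≠ ∞ := by
  refine ne_top_of_le_ne_top
    (b := eLq q fun n => ENNReal.ofReal (dilationKernel ρ ((2 : ℝ) ^ (-n)))) ?_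
    (eLq_mono fun n => ENNReal.ofReal_le_ofReal ?_)
  · refine eLq_ne_top_of_tsum_rpow_ne_top (fun p hp => ?_) hq
    exact ((Equiv.neg ℤ).tsum_eq fun n =>
      ENNReal.ofReal (dilationKernel ρ ((2 : ℝ) ^ n)) ^ p).trans_ne
        (hρ.tsum_ofReal_dilationKernel_zpow_rpow_ne_top hp)
  · rw [zpow_neg, dilationKernel, inv_inv, div_eq_mul_inv]
    gcongr
    exact hρ.inv_apply_le_rbar_inv (by positivity)

lemma IsClassBpm.eJNorm_eq_zero_of_esumNorm_eq_zero (hρ : IsClassBpm ρ) (hq : 0 < q)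
    (hx : esumNorm i₀ i₁ x = 0) : eJNorm i₀ i₁ ρ q x = 0 := by
  set M := eLq q fun n => ENNReal.ofReal (min 1 ((2 : ℝ) ^ n) / ρ ((2 : ℝ) ^ n))
  have bound (δ : ℝ≥0) (hδ : 0 < δ) : eJNorm i₀ i₁ ρ q x ≤ δ * (3 * M) := by
    refine (hρ.eJNorm_le_of_eKfun_lt hq (κ := fun n => δ * min 1 ((2 : ℝ) ^ n)) (fun n => ?_)
      (fun n => ?_) ?_).trans_eq ?_
    · rw [eKfun_eq_zero_of_esumNorm_eq_zero _ hx]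
      exact ENNReal.ofReal_pos.2 (by positivity)
    · rw [mul_left_comm, mul_min_of_nonneg (1 : ℝ) ((2 : ℝ) ^ n) zero_le_two,
        zpow_add_one₀ two_ne_zero, mul_comm ((2 : ℝ) ^ n)]
      gcongr
      norm_num
    · simpa only [mul_left_comm] using summable_min_one_inv_zpow_mul_min_one_zpow.mul_left (δ : ℝ)
    · simp only [mul_div_assoc, ENNReal.ofReal_mul δ.coe_nonneg, ENNReal.ofReal_coe_nnreal,
        eLq_const_mul hq]
      exact mul_left_comm _ _ _
  have hM : 3 * M ≠ ∞ := ENNReal.mul_ne_top ENNReal.ofNat_ne_top (hρ.eLq_min_one_div_ne_top hq)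
  refine nonpos_iff_eq_zero.1 (ENNReal.le_of_forall_pos_le_add fun ε hε _ => ?_)
  obtain ⟨δ, hδ, hδM⟩ := ENNReal.exists_nnreal_pos_mul_lt hM (ENNReal.coe_pos.2 hε).ne'
  rw [zero_add]
  exact (bound δ hδ).trans hδM.le

lemma IsClassBpm.eJNorm_le_six_mul_eKNorm (hρ : IsClassBpm ρ) (hq : 0 < q) (x : V) :
    eJNorm i₀ i₁ ρ q x ≤ 6 * eKNorm i₀ i₁ ρ q x := by
  rcases eq_or_ne (esumNorm i₀ i₁ x) 0 with hx | hx
  · rw [hρ.eJNorm_eq_zero_of_esumNorm_eq_zero hq hx]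
    exact zero_le
  · exact hρ.eJNorm_le_six_mul_eKNorm_of_esumNorm_ne_zero hq hx

theorem statement16_general (i₀ : E₀ →ₗ[ℝ] V) (i₁ : E₁ →ₗ[ℝ] V) (ρ : ℝ → ℝ) (hρ : IsClassBpm ρ)
    (q : ℝ≥0∞) (hq : 0 < q) :
    ∃ C > 0, ∀ x : V,
      eKNorm i₀ i₁ ρ q x ≤ ENNReal.ofReal C * eJNorm i₀ i₁ ρ q x ∧
      eJNorm i₀ i₁ ρ q x ≤ ENNReal.ofReal C * eKNorm i₀ i₁ ρ q x := by
  obtain ⟨C, hC, eKNorm_le⟩ := hρ.exists_eKNorm_le_mul_eJNorm i₀ i₁ hq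
  have ofReal_max : ENNReal.ofReal (max C.toReal 6) = max C 6 := by
    rw [ENNReal.ofReal_max, ENNReal.ofReal_toReal hC, ENNReal.ofReal_ofNat]
  refine ⟨max C.toReal 6, by positivity, fun x => ?_⟩
  rw [ofReal_max]
  constructor
  · exact (eKNorm_le x).trans (by gcongr; exact le_max_left _ _)
  · exact (hρ.eJNorm_le_six_mul_eKNorm hq x).trans (by gcongr; exact le_max_right _ _)

end Couple

/-- Equivalence Theorem: for a Banach couple `(E₀,E₁)`, `ρ ∈ ℬ^{+-}` and
`0 < q ≤ ∞`, `(E₀,E₁)_{ρ,q;J} = (E₀,E₁)_{ρ,q;K}` with equivalent (extended) norms. -/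
theorem statement16 {E₀ E₁ V : Type*}
    [NormedAddCommGroup E₀] [NormedSpace ℝ E₀] [NormedAddCommGroup E₁] [NormedSpace ℝ E₁]
    [AddCommGroup V] [Module ℝ V] [TopologicalSpace V]
    (i₀ : E₀ →ₗ[ℝ] V) (i₁ : E₁ →ₗ[ℝ] V) (hE : IsBanachCouple i₀ i₁)
    (ρ : ℝ → ℝ) (hρ : IsClassBpm ρ) (q : ℝ≥0∞) (hq : 0 < q) :
    ∃ C > 0, ∀ x : V,
      eKNorm i₀ i₁ ρ q x ≤ ENNReal.ofReal C * eJNorm i₀ i₁ ρ q x ∧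
      eJNorm i₀ i₁ ρ q x ≤ ENNReal.ofReal C * eKNorm i₀ i₁ ρ q x := by
  exact statement16_general i₀ i₁ ρ hρ q hq
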